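/- arXiv:2304.02406 — 3 statements merged into one kernel-verified Lean document; each statement's English description precedes it below -/
import Mathlib

section
/- Let ψ_α, ψ_β : M_d(ℝ) → ℝ be differentiable, let φ_α, φ_β > 0 with s = φ_α + φ_β, let G be a fixed d×d matrix (collecting F − Σ_{i≠α,β} φ_i F_i) and n̂ ∈ ℝ^d a fixed vector. Define the pairwise interface energy E(a) = (φ_α/s) ψ_α(F_{αβ}(a)) + (φ_β/s) ψ_β(F_{βα}(a)) with F_{αβ}(a) = s⁻¹[G − φ_β (a ⊗ n̂)] and F_{βα}(a) = s⁻¹[G + φ_α (a ⊗ n̂)]. Then E is differentiable and its derivative at a in direction δa equals (φ_α φ_β / s²) · [(P_{βα} − P_{αβ}) n̂] · δa, where P_{αβ} = Dψ_α(F_{αβ}(a)) and P_{βα} = Dψ_β(F_{βα}(a)) are the phase stresses (gradients identified with matrices via the Frobenius inner product). Consequently, a is a critical point of E if and only if P_{αβ} n̂ = P_{βα} n̂, i.e. partial rank-one relaxation of the pairwise energy with respect to the jump vector enforces the static equilibrium (traction continuity) condition on the pairwise interface. -/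
open Matrix

attribute [local instance] Matrix.normedAddCommGroup Matrix.normedSpace

/-- The Frobenius inner product `⟨A, B⟩ = tr (A Bᵀ)`. -/
noncomputable def frob {d : ℕ} (A B : Matrix (Fin d) (Fin d) ℝ) : ℝ := (A * Bᵀ).trace

/-- The pairwise interface energy
`E(a) = (φ_α/s) ψ_α(s⁻¹[G − φ_β a⊗n̂]) + (φ_β/s) ψ_β(s⁻¹[G + φ_α a⊗n̂])`, `s = φ_α + φ_β`. -/
noncomputable def pairInterfaceEnergy {d : ℕ}
    (ψα ψβ : Matrix (Fin d) (Fin d) ℝ → ℝ) (φα φβ : ℝ)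
    (G : Matrix (Fin d) (Fin d) ℝ) (nh : Fin d → ℝ)
    (a : EuclideanSpace ℝ (Fin d)) : ℝ :=
  (φα / (φα + φβ)) * ψα ((φα + φβ)⁻¹ • (G - φβ • vecMulVec a nh))
    + (φβ / (φα + φβ)) * ψβ ((φα + φβ)⁻¹ • (G + φα • vecMulVec a nh))

/-- The rank-one map `v ↦ v ⊗ n` as a linear map. -/
noncomputable def rankOneLin {d : ℕ} (n : Fin d → ℝ) :
    EuclideanSpace ℝ (Fin d) →ₗ[ℝ] Matrix (Fin d) (Fin d) ℝ where
  toFun v := vecMulVec v n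
  map_add' x y := by ext i j; simp [vecMulVec_apply, add_mul]
  map_smul' c x := by ext i j; simp [vecMulVec_apply, mul_assoc]

lemma frob_vecMulVec {d : ℕ} (P : Matrix (Fin d) (Fin d) ℝ) (v n : Fin d → ℝ) :
    frob P (vecMulVec v n) = v ⬝ᵥ (P.mulVec n) := by
  simp only [frob, trace, diag, mul_apply, transpose_apply, vecMulVec_apply, dotProduct, mulVec,
    Finset.mul_sum]
  refine Finset.sum_congr rfl fun i _ => Finset.sum_congr rfl fun j _ => by ring

lemma frob_smul {d : ℕ} (P H : Matrix (Fin d) (Fin d) ℝ) (c : ℝ) :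
    frob P (c • H) = c * frob P H := by
  simp [frob]

/-- the pairwise interface energy is differentiable in the jump vector `a`,
its derivative in direction `δa` is `(φ_α φ_β / s²) [(P_{βα} − P_{αβ}) n̂] · δa`, and
`a` is a critical point iff the traction continuity `P_{αβ} n̂ = P_{βα} n̂` holds. -/
theorem pairwise_energy_relaxation_static_equilibrium {d : ℕ}
    (ψα ψβ : Matrix (Fin d) (Fin d) ℝ → ℝ)
    (hψα : Differentiable ℝ ψα) (hψβ : Differentiable ℝ ψβ)
    (φα φβ : ℝ) (hφα : 0 < φα) (hφβ : 0 < φβ)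
    (G : Matrix (Fin d) (Fin d) ℝ) (nh : Fin d → ℝ)
    (a : EuclideanSpace ℝ (Fin d))
    (Pαβ Pβα : Matrix (Fin d) (Fin d) ℝ)
    (hPαβ : ∀ H, fderiv ℝ ψα ((φα + φβ)⁻¹ • (G - φβ • vecMulVec a nh)) H = frob Pαβ H)
    (hPβα : ∀ H, fderiv ℝ ψβ ((φα + φβ)⁻¹ • (G + φα • vecMulVec a nh)) H = frob Pβα H) :
    HasFDerivAt (pairInterfaceEnergy ψα ψβ φα φβ G nh)
      ((φα * φβ / (φα + φβ) ^ 2) •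
        innerSL ℝ ((WithLp.equiv 2 (Fin d → ℝ)).symm ((Pβα - Pαβ).mulVec nh))) a ∧
    (fderiv ℝ (pairInterfaceEnergy ψα ψβ φα φβ G nh) a = 0 ↔
      Pαβ.mulVec nh = Pβα.mulVec nh) := by
  have hs : φα + φβ ≠ 0 := by positivity
  have main : HasFDerivAt (pairInterfaceEnergy ψα ψβ φα φβ G nh)
      ((φα * φβ / (φα + φβ) ^ 2) •
        innerSL ℝ ((WithLp.equiv 2 (Fin d → ℝ)).symm ((Pβα - Pαβ).mulVec nh))) a := by
    let L : EuclideanSpace ℝ (Fin d) →L[ℝ] Matrix (Fin d) (Fin d) ℝ :=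
      LinearMap.toContinuousLinearMap (rankOneLin nh)
    have hL : HasFDerivAt (fun x : EuclideanSpace ℝ (Fin d) => vecMulVec x nh) L a :=
      L.hasFDerivAt
    have h1 := ((hL.const_smul φβ).const_sub G).const_smul (φα + φβ)⁻¹
    have h2 := ((hL.const_smul φα).const_add G).const_smul (φα + φβ)⁻¹
    have k1 := (HasFDerivAt.comp a (hψα _).hasFDerivAt h1).const_mul (φα / (φα + φβ))
    have k2 := (HasFDerivAt.comp a (hψβ _).hasFDerivAt h2).const_mul (φβ / (φα + φβ))
    refine (k1.add k2).congr_fderiv ?_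
    ext v
    have e1 : fderiv ℝ ψα ((φα + φβ)⁻¹ • (G - φβ • vecMulVec a nh))
        ((φα + φβ)⁻¹ • -(φβ • vecMulVec v nh)) =
        -((φα + φβ)⁻¹ * φβ) * (v ⬝ᵥ Pαβ.mulVec nh) := by
      rw [hPαβ, ← frob_vecMulVec, ← frob_smul, ← neg_smul, smul_smul, mul_neg]
    have e2 : fderiv ℝ ψβ ((φα + φβ)⁻¹ • (G + φα • vecMulVec a nh))
        ((φα + φβ)⁻¹ • (φα • vecMulVec v nh)) =
        ((φα + φβ)⁻¹ * φα) * (v ⬝ᵥ Pβα.mulVec nh) := by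
      rw [hPβα, ← frob_vecMulVec, ← frob_smul, smul_smul]
    have e3 : inner ℝ ((WithLp.equiv 2 (Fin d → ℝ)).symm ((Pβα - Pαβ).mulVec nh)) v =
        v ⬝ᵥ Pβα.mulVec nh - v ⬝ᵥ Pαβ.mulVec nh := by
      rw [EuclideanSpace.inner_eq_star_dotProduct, ← dotProduct_sub, ← sub_mulVec]
      rfl
    change φα / (φα + φβ) * fderiv ℝ ψα ((φα + φβ)⁻¹ • (G - φβ • vecMulVec a nh))
        ((φα + φβ)⁻¹ • -(φβ • vecMulVec v nh)) +
      φβ / (φα + φβ) * fderiv ℝ ψβ ((φα + φβ)⁻¹ • (G + φα • vecMulVec a nh))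
        ((φα + φβ)⁻¹ • (φα • vecMulVec v nh)) =
      φα * φβ / (φα + φβ) ^ 2 *
        inner ℝ ((WithLp.equiv 2 (Fin d → ℝ)).symm ((Pβα - Pαβ).mulVec nh)) v
    rw [e1, e2, e3]
    field_simp
    ring
  refine ⟨main, ?_⟩
  rw [main.fderiv]
  have hc : φα * φβ / (φα + φβ) ^ 2 ≠ 0 := by positivity
  rw [smul_eq_zero, or_iff_right hc, ← norm_eq_zero, innerSL_apply_norm, norm_eq_zero]
  constructor
  · intro h
    have h' : (Pβα - Pαβ).mulVec nh = 0 := by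
      have := congrArg (WithLp.equiv 2 (Fin d → ℝ)) h
      simpa using this
    rw [sub_mulVec, sub_eq_zero] at h'
    exact h'.symm
  · intro h
    rw [sub_mulVec, h, sub_self]
    rfl
end

section
/- (Closed-form pairwise jump vector, general stiffnesses.) Fix n ≥ 2, indices α ≠ β, reals φ_1,…,φ_n ≥ 0 with Σφ_i = 1 and φ_α, φ_β > 0, s = φ_α + φ_β; fix symmetric d×d matrices ε (total strain), ε_i for i ≠ α, β (strains of the other phase-fields), Bain strains ε_α^B, ε_β^B; fix stiffness tensors C_α, C_β and a unit vector n̂ ∈ ℝ^d. Define the pairwise strains ε_{αβ}(a) = s⁻¹[ε − φ_β (a ⊗ n̂)ˢʸᵐ − Σ_{i≠α,β} φ_i ε_i] and ε_{βα}(a) = s⁻¹[ε + φ_α (a ⊗ n̂)ˢʸᵐ − Σ_{i≠α,β} φ_i ε_i], and the pairwise interface energy E(a) = (φ_α/s)·½⟨ε_{αβ}(a) − ε_α^B, C_α(ε_{αβ}(a) − ε_α^B)⟩ + (φ_β/s)·½⟨ε_{βα}(a) − ε_β^B, C_β(ε_{βα}(a) − ε_β^B)⟩. Then E has a unique global minimizer,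 given explicitly by a* = −Q⁻¹ · ([C_β(ε − Σ_{i≠α,β} φ_i ε_i − s ε_β^B) − C_α(ε − Σ_{i≠α,β} φ_i ε_i − s ε_α^B)] n̂), where Q is the acoustic tensor of φ_β C_α + φ_α C_β, i.e. Q a = ((φ_β C_α + φ_α C_β)[(a ⊗ n̂)ˢʸᵐ]) n̂. -/
open Matrix BigOperators Finset

/-- The symmetric part `Aˢʸᵐ = (A + Aᵀ)/2`. -/
noncomputable def symPart {d : ℕ} (A : Matrix (Fin d) (Fin d) ℝ) :
    Matrix (Fin d) (Fin d) ℝ := (1 / 2 : ℝ) • (A + Aᵀ)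

/-- A stiffness tensor: self-adjoint for the Frobenius inner product, `C A = C(Aˢʸᵐ)`
symmetric for every `A`, and positive definite on nonzero symmetric matrices. -/
def IsStiffness {d : ℕ}
    (C : Matrix (Fin d) (Fin d) ℝ →ₗ[ℝ] Matrix (Fin d) (Fin d) ℝ) : Prop :=
  (∀ A B, frob (C A) B = frob A (C B)) ∧
  (∀ A, C A = C (symPart A)) ∧
  (∀ A, (C A)ᵀ = C A) ∧
  (∀ S : Matrix (Fin d) (Fin d) ℝ, Sᵀ = S → S ≠ 0 → 0 < frob S (C S))

/-- The pairwise interface energy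
`E(a) = (φ_α/s)·½⟨ε_{αβ}(a) − ε_α^B, C_α(ε_{αβ}(a) − ε_α^B)⟩
      + (φ_β/s)·½⟨ε_{βα}(a) − ε_β^B, C_β(ε_{βα}(a) − ε_β^B)⟩`,
with `ε_{αβ}(a) = s⁻¹[G − φ_β (a ⊗ n̂)ˢʸᵐ]`, `ε_{βα}(a) = s⁻¹[G + φ_α (a ⊗ n̂)ˢʸᵐ]`,
`s = φ_α + φ_β` and `G` the total strain minus the strain contribution of the other
phase-fields. -/
noncomputable def pairEnergy {d : ℕ}
    (Cα Cβ : Matrix (Fin d) (Fin d) ℝ →ₗ[ℝ] Matrix (Fin d) (Fin d) ℝ)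
    (εαB εβB : Matrix (Fin d) (Fin d) ℝ) (φα φβ : ℝ)
    (G : Matrix (Fin d) (Fin d) ℝ) (nh a : Fin d → ℝ) : ℝ :=
  (φα / (φα + φβ)) * ((1 / 2) *
      frob ((φα + φβ)⁻¹ • (G - φβ • symPart (vecMulVec a nh)) - εαB)
        (Cα ((φα + φβ)⁻¹ • (G - φβ • symPart (vecMulVec a nh)) - εαB)))
    + (φβ / (φα + φβ)) * ((1 / 2) *
      frob ((φα + φβ)⁻¹ • (G + φα • symPart (vecMulVec a nh)) - εβB)
        (Cβ ((φα + φβ)⁻¹ • (G + φα • symPart (vecMulVec a nh)) - εβB)))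

theorem frob_add_left' {d : ℕ} (A B C : Matrix (Fin d) (Fin d) ℝ) :
    frob (A + B) C = frob A C + frob B C := by
  simp [frob, Matrix.add_mul]

theorem frob_add_right' {d : ℕ} (A B C : Matrix (Fin d) (Fin d) ℝ) :
    frob A (B + C) = frob A B + frob A C := by
  simp [frob, Matrix.mul_add]

theorem frob_sub_right' {d : ℕ} (A B C : Matrix (Fin d) (Fin d) ℝ) :
    frob A (B - C) = frob A B - frob A C := by
  simp [frob, Matrix.mul_sub]

theorem frob_smul_left' {d : ℕ} (c : ℝ) (A B : Matrix (Fin d) (Fin d) ℝ) :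
    frob (c • A) B = c * frob A B := by
  simp [frob]

theorem frob_smul_right' {d : ℕ} (c : ℝ) (A B : Matrix (Fin d) (Fin d) ℝ) :
    frob A (c • B) = c * frob A B := by
  simp [frob]

theorem frob_comm' {d : ℕ} (A B : Matrix (Fin d) (Fin d) ℝ) :
    frob A B = frob B A := by
  unfold frob
  rw [← Matrix.trace_transpose, Matrix.transpose_mul, Matrix.transpose_transpose]

theorem frob_quad {d : ℕ} {C : Matrix (Fin d) (Fin d) ℝ →ₗ[ℝ] Matrix (Fin d) (Fin d) ℝ}
    (hC : IsStiffness C) (x t : Matrix (Fin d) (Fin d) ℝ) (c : ℝ) :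
    frob (x + c • t) (C (x + c • t))
      = frob x (C x) + 2 * c * frob t (C x) + c ^ 2 * frob t (C t) := by
  have h : frob x (C t) = frob t (C x) := by rw [← hC.1, frob_comm']
  simp only [map_add, map_smul, frob_add_left', frob_add_right', frob_smul_left',
    frob_smul_right', h]
  ring

/-- the linear map `a ↦ (a ⊗ n)ˢʸᵐ` -/
noncomputable def symT {d : ℕ} (nh : Fin d → ℝ) :
    (Fin d → ℝ) →ₗ[ℝ] Matrix (Fin d) (Fin d) ℝ where
  toFun a := symPart (vecMulVec a nh)
  map_add' a b := by
    ext i j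
    simp [symPart, vecMulVec_apply]
    ring
  map_smul' c a := by
    ext i j
    simp [symPart, vecMulVec_apply]
    ring

theorem symT_transpose {d : ℕ} (nh a : Fin d → ℝ) : (symT nh a)ᵀ = symT nh a := by
  ext i j
  simp [symT, symPart, vecMulVec_apply]
  ring

theorem symT_inj {d : ℕ} (nh a : Fin d → ℝ) (hnh : nh ⬝ᵥ nh = 1) (h : symT nh a = 0) :
    a = 0 := by
  have h1 : ∀ i j, a i * nh j + a j * nh i = 0 := by
    intro i j
    have := congrFun (congrFun h i) j
    simp [symT, symPart, vecMulVec_apply] at this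
    linarith
  have h2 : ∀ i, a i + (a ⬝ᵥ nh) * nh i = 0 := by
    intro i
    have : ∑ j, (a i * nh j + a j * nh i) * nh j = 0 := by simp [h1]
    calc a i + (a ⬝ᵥ nh) * nh i = a i * (nh ⬝ᵥ nh) + (a ⬝ᵥ nh) * nh i := by rw [hnh, mul_one]
      _ = ∑ j, (a i * nh j + a j * nh i) * nh j := by
        simp only [dotProduct, Finset.mul_sum, Finset.sum_mul, ← Finset.sum_add_distrib]
        exact Finset.sum_congr rfl fun j _ => by ring
      _ = 0 := this
  have h3 : a ⬝ᵥ nh = 0 := by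
    have : ∑ i, (a i + (a ⬝ᵥ nh) * nh i) * nh i = 0 := by simp [h2]
    have h4 : ∑ i, (a i + (a ⬝ᵥ nh) * nh i) * nh i = a ⬝ᵥ nh + (a ⬝ᵥ nh) * (nh ⬝ᵥ nh) := by
      conv_rhs => rw [dotProduct, dotProduct.eq_1 nh nh, Finset.mul_sum, ← Finset.sum_add_distrib]
      exact Finset.sum_congr rfl fun j _ => by simp only [dotProduct]; ring
    rw [h4, hnh] at this
    linarith
  ext i
  have := h2 i
  simpa [h3] using this

theorem frob_symT {d : ℕ} (nh a : Fin d → ℝ) (M : Matrix (Fin d) (Fin d) ℝ) (hM : Mᵀ = M) :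
    frob (symT nh a) M = a ⬝ᵥ (M.mulVec nh) := by
  have e1 : frob (vecMulVec a nh) M = a ⬝ᵥ (M.mulVec nh) := by
    simp only [frob, trace, Matrix.diag, Matrix.mul_apply, transpose_apply, vecMulVec_apply, dotProduct, mulVec,
      Finset.mul_sum]
    exact Finset.sum_congr rfl fun i _ => Finset.sum_congr rfl fun j _ => by ring
  have e2 : frob (vecMulVec a nh)ᵀ M = frob (vecMulVec a nh) M := by
    unfold frob
    rw [← Matrix.trace_transpose, Matrix.transpose_mul, Matrix.transpose_transpose,
      Matrix.transpose_transpose, hM, Matrix.trace_mul_comm]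
  change frob ((1 / 2 : ℝ) • (vecMulVec a nh + (vecMulVec a nh)ᵀ)) M = _
  rw [frob_smul_left', frob_add_left', e2, e1]
  ring

theorem pairEnergy_expand {d : ℕ}
    {Cα Cβ : Matrix (Fin d) (Fin d) ℝ →ₗ[ℝ] Matrix (Fin d) (Fin d) ℝ}
    (hCα : IsStiffness Cα) (hCβ : IsStiffness Cβ)
    (εαB εβB : Matrix (Fin d) (Fin d) ℝ) (p q : ℝ) (hp : 0 < p) (hq : 0 < q)
    (G : Matrix (Fin d) (Fin d) ℝ) (nh a b : Fin d → ℝ) :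
    pairEnergy Cα Cβ εαB εβB p q G nh b = pairEnergy Cα Cβ εαB εβB p q G nh a
      + p * q / (p + q) ^ 3 * frob (symT nh (b - a))
        ((q • Cα + p • Cβ) (symT nh a)
          + (Cβ (G - (p + q) • εβB) - Cα (G - (p + q) • εαB)))
      + p * q / (2 * (p + q) ^ 3) *
        frob (symT nh (b - a)) ((q • Cα + p • Cβ) (symT nh (b - a))) := by
  have hs : p + q ≠ 0 := by positivity
  have ha : (p + q)⁻¹ • (G - q • symPart (vecMulVec b nh)) - εαB
      = ((p + q)⁻¹ • (G - q • symPart (vecMulVec a nh)) - εαB)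
        + (-(q / (p + q))) • symT nh (b - a) := by
    rw [map_sub]
    change _ = _ + (-(q / (p + q))) • (symPart (vecMulVec b nh) - symPart (vecMulVec a nh))
    module
  have hb : (p + q)⁻¹ • (G + p • symPart (vecMulVec b nh)) - εβB
      = ((p + q)⁻¹ • (G + p • symPart (vecMulVec a nh)) - εβB)
        + (p / (p + q)) • symT nh (b - a) := by
    rw [map_sub]
    change _ = _ + (p / (p + q)) • (symPart (vecMulVec b nh) - symPart (vecMulVec a nh))
    module
  have hxa : (p + q)⁻¹ • (G - q • symPart (vecMulVec a nh)) - εαB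
      = (p + q)⁻¹ • ((G - (p + q) • εαB) - q • symT nh a) := by
    change _ = (p + q)⁻¹ • ((G - (p + q) • εαB) - q • symPart (vecMulVec a nh))
    rw [smul_sub, smul_sub, smul_sub, smul_smul (p + q)⁻¹ (p + q), inv_mul_cancel₀ hs, one_smul]
    abel
  have hxb : (p + q)⁻¹ • (G + p • symPart (vecMulVec a nh)) - εβB
      = (p + q)⁻¹ • ((G - (p + q) • εβB) + p • symT nh a) := by
    change _ = (p + q)⁻¹ • ((G - (p + q) • εβB) + p • symPart (vecMulVec a nh))
    rw [smul_add, smul_add, smul_sub, smul_smul (p + q)⁻¹ (p + q), inv_mul_cancel₀ hs, one_smul]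
    abel
  unfold pairEnergy
  rw [ha, hb, frob_quad hCα, frob_quad hCβ, hxa, hxb]
  generalize symT nh (b - a) = t
  generalize symT nh a = u
  generalize G - (p + q) • εβB = X
  generalize G - (p + q) • εαB = Y
  generalize hA : frob ((p + q)⁻¹ • (Y - q • u)) (Cα ((p + q)⁻¹ • (Y - q • u))) = A
  generalize hB : frob ((p + q)⁻¹ • (X + p • u)) (Cβ ((p + q)⁻¹ • (X + p • u))) = B
  simp only [map_smul, map_add, map_sub, LinearMap.add_apply, LinearMap.smul_apply,
    frob_add_right', frob_sub_right', frob_smul_right']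
  field_simp
  ring

/-- closed-form pairwise jump vector, general stiffnesses: the pairwise
interface energy has a unique global minimizer `a*`, given explicitly by
`a* = −Q⁻¹ ([C_β(ε − Σ φ_i ε_i − s ε_β^B) − C_α(ε − Σ φ_i ε_i − s ε_α^B)] n̂)`,
where `Q` is the acoustic tensor of `φ_β C_α + φ_α C_β`. -/
theorem closed_form_pairwise_jump_vector {d n : ℕ} (hn : 2 ≤ n)
    (α β : Fin n) (hαβ : α ≠ β)
    (φ : Fin n → ℝ) (hφ0 : ∀ i, 0 ≤ φ i) (hφsum : ∑ i, φ i = 1)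
    (hφα : 0 < φ α) (hφβ : 0 < φ β)
    (ε : Matrix (Fin d) (Fin d) ℝ) (hε : εᵀ = ε)
    (εo : Fin n → Matrix (Fin d) (Fin d) ℝ) (hεo : ∀ i, (εo i)ᵀ = εo i)
    (εαB εβB : Matrix (Fin d) (Fin d) ℝ) (hεαB : εαBᵀ = εαB) (hεβB : εβBᵀ = εβB)
    (Cα Cβ : Matrix (Fin d) (Fin d) ℝ →ₗ[ℝ] Matrix (Fin d) (Fin d) ℝ)
    (hCα : IsStiffness Cα) (hCβ : IsStiffness Cβ)
    (nh : Fin d → ℝ) (hnh : nh ⬝ᵥ nh = 1) :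
    ∃ astar : Fin d → ℝ,
      ((φ β • Cα + φ α • Cβ) (symPart (vecMulVec astar nh))).mulVec nh
          = -((Cβ (ε - (∑ i ∈ univ \ {α, β}, φ i • εo i) - (φ α + φ β) • εβB)
              - Cα (ε - (∑ i ∈ univ \ {α, β}, φ i • εo i) - (φ α + φ β) • εαB)).mulVec nh)
        ∧ (∀ b, pairEnergy Cα Cβ εαB εβB (φ α) (φ β)
              (ε - ∑ i ∈ univ \ {α, β}, φ i • εo i) nh astar
            ≤ pairEnergy Cα Cβ εαB εβB (φ α) (φ β)
              (ε - ∑ i ∈ univ \ {α, β}, φ i • εo i) nh b)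
        ∧ (∀ a, (∀ b, pairEnergy Cα Cβ εαB εβB (φ α) (φ β)
              (ε - ∑ i ∈ univ \ {α, β}, φ i • εo i) nh a
            ≤ pairEnergy Cα Cβ εαB εβB (φ α) (φ β)
              (ε - ∑ i ∈ univ \ {α, β}, φ i • εo i) nh b) → a = astar) := by
  set G := ε - ∑ i ∈ univ \ {α, β}, φ i • εo i with hG
  set R := Cβ (G - (φ α + φ β) • εβB) - Cα (G - (φ α + φ β) • εαB) with hR
  have hpos : ∀ h : Fin d → ℝ, h ≠ 0 →
      0 < frob (symT nh h) ((φ β • Cα + φ α • Cβ) (symT nh h)) := by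
    intro h hh
    have h0 : symT nh h ≠ 0 := fun h1 => hh (symT_inj nh h hnh h1)
    have h1 := hCα.2.2.2 _ (symT_transpose nh h) h0
    have h2 := hCβ.2.2.2 _ (symT_transpose nh h) h0
    simp only [LinearMap.add_apply, LinearMap.smul_apply, frob_add_right', frob_smul_right']
    positivity
  have hsym : ∀ A, ((φ β • Cα + φ α • Cβ) A)ᵀ = (φ β • Cα + φ α • Cβ) A := by
    intro A
    simp [hCα.2.2.1, hCβ.2.2.1]
  let Q : (Fin d → ℝ) →ₗ[ℝ] (Fin d → ℝ) :=
    { toFun := fun a => ((φ β • Cα + φ α • Cβ) (symT nh a)).mulVec nh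
      map_add' := fun a b => by rw [map_add, map_add, Matrix.add_mulVec]
      map_smul' := fun c a => by
        rw [map_smul, map_smul, Matrix.smul_mulVec, RingHom.id_apply] }
  have hinj : Function.Injective Q := by
    rw [← LinearMap.ker_eq_bot, LinearMap.ker_eq_bot']
    intro a ha
    by_contra hne
    have h1 := hpos a hne
    rw [frob_symT _ _ _ (hsym _)] at h1
    change 0 < a ⬝ᵥ Q a at h1
    simp [ha] at h1
  obtain ⟨a, ha⟩ := (LinearMap.injective_iff_surjective.mp hinj) (-(R.mulVec nh))
  change ((φ β • Cα + φ α • Cβ) (symT nh a)).mulVec nh = _ at ha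
  have hexp : ∀ b, pairEnergy Cα Cβ εαB εβB (φ α) (φ β) G nh b
      = pairEnergy Cα Cβ εαB εβB (φ α) (φ β) G nh a
        + φ α * φ β / (2 * (φ α + φ β) ^ 3) *
        frob (symT nh (b - a)) ((φ β • Cα + φ α • Cβ) (symT nh (b - a))) := by
    intro b
    rw [pairEnergy_expand hCα hCβ εαB εβB (φ α) (φ β) hφα hφβ G nh a b, ← hR,
      frob_symT nh (b - a) ((φ β • Cα + φ α • Cβ) (symT nh a) + R)
        (by rw [transpose_add, hsym, hR, transpose_sub, hCα.2.2.1, hCβ.2.2.1]),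
      Matrix.add_mulVec, ha]
    simp
  have hlt : ∀ b, b ≠ a → pairEnergy Cα Cβ εαB εβB (φ α) (φ β) G nh a
      < pairEnergy Cα Cβ εαB εβB (φ α) (φ β) G nh b := by
    intro b hb
    rw [hexp b]
    have := hpos (b - a) (sub_ne_zero.mpr hb)
    have : 0 < φ α * φ β / (2 * (φ α + φ β) ^ 3) *
        frob (symT nh (b - a)) ((φ β • Cα + φ α • Cβ) (symT nh (b - a))) := by positivity
    linarith
  refine ⟨a, ha, fun b => ?_, fun b hb => ?_⟩
  · by_cases h : b = a
    · rw [h]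
    · exact (hlt b h).le
  · by_contra h
    exact absurd (hb a) (not_le.mpr (hlt b h))
end

section
/- (Dual-phase driving force.) Let ψ_α, ψ_β : M_d(ℝ) → ℝ be differentiable, F a d×d matrix, a ∈ ℝ^d, and n̂ ∈ ℝ^d a unit vector. For (x, y) with x + y ≠ 0 define g(x, y) = x·ψ_α(F − (y/(x+y)) a ⊗ n̂) + y·ψ_β(F + (x/(x+y)) a ⊗ n̂). Then at any point (φ_α, φ_β) with φ_α + φ_β = 1 and φ_α, φ_β > 0: ∂g/∂y − ∂g/∂x = ψ_β(F_{βα}) − ψ_α(F_{αβ}) − ⟨φ_α P_α + φ_β P_β, a ⊗ n̂⟩, where F_{αβ} = F − φ_β a ⊗ n̂, F_{βα} = F + φ_α a ⊗ n̂, P_α = Dψ_α(F_{αβ}), P_β = Dψ_β(F_{βα}); moreover, with P = φ_α P_α + φ_β P_β, ⟨P, a ⊗ n̂⟩ = (P n̂)·a = (P n̂)·(⟦F⟧ n̂) where ⟦F⟧ = F_{βα} − F_{αβ} = a ⊗ n̂. Hence the elastic driving force of a dual-phase material is ΔG^{elas}_{αβ} = ⟦ψ^{elas}⟧_{αβ}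 − (P·n̂)·(⟦F⟧_{αβ}·n̂). -/
open Matrix

attribute [local instance] Matrix.normedAddCommGroup Matrix.normedSpace

/-- The two-variable effective elastic energy of a dual-phase material:
`g(x, y) = x ψ_α(F − (y/(x+y)) a⊗n̂) + y ψ_β(F + (x/(x+y)) a⊗n̂)`. -/
noncomputable def dualEnergy {d : ℕ} (ψα ψβ : Matrix (Fin d) (Fin d) ℝ → ℝ)
    (F : Matrix (Fin d) (Fin d) ℝ) (a nh : Fin d → ℝ) (x y : ℝ) : ℝ :=
  x * ψα (F - (y / (x + y)) • vecMulVec a nh)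
    + y * ψβ (F + (x / (x + y)) • vecMulVec a nh)

/-- dual-phase driving force: at `(φ_α, φ_β)` with `φ_α + φ_β = 1`,
`∂g/∂y − ∂g/∂x = ψ_β(F_{βα}) − ψ_α(F_{αβ}) − ⟨φ_α P_α + φ_β P_β, a ⊗ n̂⟩`; moreover with
`P = φ_α P_α + φ_β P_β`, `⟨P, a ⊗ n̂⟩ = (P n̂)·a = (P n̂)·(⟦F⟧ n̂)`. Hence the elastic
driving force is `ΔG = ⟦ψ⟧ − (P·n̂)·(⟦F⟧·n̂)`. -/
theorem dual_phase_driving_force {d : ℕ}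
    (ψα ψβ : Matrix (Fin d) (Fin d) ℝ → ℝ)
    (hψα : Differentiable ℝ ψα) (hψβ : Differentiable ℝ ψβ)
    (F : Matrix (Fin d) (Fin d) ℝ) (a nh : Fin d → ℝ) (hnh : nh ⬝ᵥ nh = 1)
    (φα φβ : ℝ) (hsum : φα + φβ = 1) (hφα : 0 < φα) (hφβ : 0 < φβ)
    (Pα Pβ : Matrix (Fin d) (Fin d) ℝ)
    (hPα : ∀ H, fderiv ℝ ψα (F - φβ • vecMulVec a nh) H = frob Pα H)
    (hPβ : ∀ H, fderiv ℝ ψβ (F + φα • vecMulVec a nh) H = frob Pβ H) :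
    (deriv (fun y => dualEnergy ψα ψβ F a nh φα y) φβ
        - deriv (fun x => dualEnergy ψα ψβ F a nh x φβ) φα
      = ψβ (F + φα • vecMulVec a nh) - ψα (F - φβ • vecMulVec a nh)
          - frob (φα • Pα + φβ • Pβ) (vecMulVec a nh)) ∧
    frob (φα • Pα + φβ • Pβ) (vecMulVec a nh)
      = ((φα • Pα + φβ • Pβ).mulVec nh) ⬝ᵥ a ∧
    ((φα • Pα + φβ • Pβ).mulVec nh) ⬝ᵥ a
      = ((φα • Pα + φβ • Pβ).mulVec nh) ⬝ᵥ
          (((F + φα • vecMulVec a nh) - (F - φβ • vecMulVec a nh)).mulVec nh) := by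
  set A := vecMulVec a nh with hAdef
  have hne : φα + φβ ≠ 0 := by rw [hsum]; exact one_ne_zero
  have key : ∀ (ψ : Matrix (Fin d) (Fin d) ℝ → ℝ), Differentiable ℝ ψ →
      ∀ (c : ℝ → ℝ) (c' t : ℝ), HasDerivAt c c' t →
      HasDerivAt (fun s => ψ (F + c s • A)) (c' * fderiv ℝ ψ (F + c t • A) A) t := by
    intro ψ hψ c c' t hc
    have h1 : HasDerivAt (fun s => F + c s • A) (c' • A) t :=
      (hc.smul_const A).const_add F
    have h2 := (hψ (F + c t • A)).hasFDerivAt.comp_hasDerivAt t h1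
    exact h2.congr_deriv ((fderiv ℝ ψ (F + c t • A)).map_smul c' A)
  have hE : ∀ x y, dualEnergy ψα ψβ F a nh x y
      = x * ψα (F + (-(y / (x + y))) • A) + y * ψβ (F + (x / (x + y)) • A) := by
    intro x y
    rw [dualEnergy, neg_smul, ← sub_eq_add_neg]
  have e1 : F + (-(φβ / (φα + φβ))) • A = F - φβ • A := by
    rw [hsum, div_one, neg_smul, ← sub_eq_add_neg]
  have e2 : F + (φα / (φα + φβ)) • A = F + φα • A := by
    rw [hsum, div_one]
  have dy : HasDerivAt (fun y => dualEnergy ψα ψβ F a nh φα y)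
      (φα * (-φα * frob Pα A) + (ψβ (F + φα • A) + φβ * (-φα * frob Pβ A))) φβ := by
    have hs : HasDerivAt (fun y : ℝ => φα + y) 1 φβ := (hasDerivAt_id φβ).const_add φα
    have c1 : HasDerivAt (fun y : ℝ => -(y / (φα + y))) (-φα) φβ := by
      have := ((hasDerivAt_id φβ).div hs hne).neg
      refine this.congr_deriv ?_
      simp [hsum]; linarith
    have c2 : HasDerivAt (fun y : ℝ => φα / (φα + y)) (-φα) φβ := by
      have := ((hasDerivAt_const φβ φα).div hs hne)
      refine this.congr_deriv ?_
      simp [hsum]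
    have h := ((key ψα hψα _ _ _ c1).const_mul φα).add
      ((hasDerivAt_id φβ).mul (key ψβ hψβ _ _ _ c2))
    simp only [hE]
    refine h.congr_deriv ?_
    simp only [e1, e2, hPα, hPβ, id]; ring
  have dx : HasDerivAt (fun x => dualEnergy ψα ψβ F a nh x φβ)
      (ψα (F - φβ • A) + φα * (φβ * frob Pα A) + φβ * (φβ * frob Pβ A)) φα := by
    have hs : HasDerivAt (fun x : ℝ => x + φβ) 1 φα := (hasDerivAt_id φα).add_const φβ
    have c1 : HasDerivAt (fun x : ℝ => -(φβ / (x + φβ))) φβ φα := by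
      have := ((hasDerivAt_const φα φβ).div hs hne).neg
      refine this.congr_deriv ?_
      simp [hsum]
    have c2 : HasDerivAt (fun x : ℝ => x / (x + φβ)) φβ φα := by
      have := ((hasDerivAt_id φα).div hs hne)
      refine this.congr_deriv ?_
      simp [hsum]; linarith
    have h := ((hasDerivAt_id φα).mul (key ψα hψα _ _ _ c1)).add
      ((key ψβ hψβ _ _ _ c2).const_mul φβ)
    simp only [hE]
    refine h.congr_deriv ?_
    simp only [e1, e2, hPα, hPβ, id]; ring
  have hfr : frob (φα • Pα + φβ • Pβ) A = φα * frob Pα A + φβ * frob Pβ A := by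
    simp [frob, Matrix.add_mul, Matrix.trace_add, Matrix.trace_smul]
  refine ⟨?_, ?_, ?_⟩
  · rw [dy.deriv, dx.deriv, hfr]
    have : φβ = 1 - φα := by linarith
    generalize ψα (F - φβ • A) = u
    generalize ψβ (F + φα • A) = v
    rw [this]; ring
  · rw [frob, hAdef, transpose_vecMulVec, mul_vecMulVec, trace_vecMulVec]
  · have : (F + φα • A) - (F - φβ • A) = A := by
      rw [add_sub_sub_cancel, ← add_smul, hsum, one_smul]
    rw [this, hAdef, vecMulVec_mulVec, hnh]
    simp
end
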